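/- Composite rule for Wigner d-matrices (general cyclic case): let n ≥ 1, let ℓ₁, ℓ₂ be half-integer spins, let θ₁, …, θ_n ∈ ℝ, and let Δ₁, …, Δ_n be shifts with Δᵢ − (ℓ₁ + ℓ₂) ∈ ℤ for each i. Then, with the cyclic convention that index n+1 means 1, ∑_{ε₁, …, ε_n} ∏_{i=1}^{n} d^{ℓ₁}_{εᵢ, εᵢ₊₁}(θᵢ) · d^{ℓ₂}_{εᵢ+Δᵢ, εᵢ₊₁+Δᵢ₊₁}(θᵢ) = ∑_{s=|ℓ₁−ℓ₂|}^{ℓ₁+ℓ₂} ∏_{i=1}^{n} d^{s}_{Δᵢ, Δᵢ₊₁}(θᵢ), where each εᵢ ranges over {−ℓ₁, −ℓ₁+1, …, ℓ₁}, s increases in integer steps from |ℓ₁−ℓ₂| to ℓ₁+ℓ₂, and any d-matrix element whose magnetic indices lie outside the allowed range for its spin is zero by convention. -/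

import Mathlib

/-- The Wigner (small) d-matrix element `d^ℓ_{m,n}(θ)`, encoded via doubled indices:
`L = 2ℓ`, `M = 2m`, `N = 2n` (so that `ℓ ± m` and `ℓ ± n` are the integers
`(L ± M)/2`, `(L ± N)/2`).  It vanishes by convention when `|m| > ℓ` or `|n| > ℓ`. -/
noncomputable def wignerd (L M N : ℤ) (θ : ℝ) : ℝ :=
  if |M| ≤ L ∧ |N| ≤ L then
    Real.sqrt
      ((Nat.factorial ((L + M) / 2).toNat * Nat.factorial ((L - M) / 2).toNat *
        Nat.factorial ((L + N) / 2).toNat * Nat.factorial ((L - N) / 2).toNat : ℕ)) *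
    ∑ s ∈ Finset.Icc (max 0 ((N - M) / 2)) (min ((L + N) / 2) ((L - M) / 2)),
      (-1 : ℝ) ^ ((M - N) / 2 + s) *
        Real.cos (θ / 2) ^ (L + (N - M) / 2 - 2 * s) *
        Real.sin (θ / 2) ^ ((M - N) / 2 + 2 * s) /
        ((Nat.factorial ((L + N) / 2 - s).toNat * Nat.factorial s.toNat *
          Nat.factorial ((M - N) / 2 + s).toNat *
          Nat.factorial ((L - M) / 2 - s).toNat : ℕ))
  else 0

open Finset Matrix

theorem path_prod {ι : Type*} [Fintype ι] [DecidableEq ι] (m : ℕ) :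
    ∀ (M : Fin (m+1) → Matrix ι ι ℝ) (a b : ι),
    (List.ofFn M).prod a b =
      ∑ e : Fin m → ι, ∏ i : Fin (m+1), M i ((Fin.cons a e : Fin (m+1) → ι) i) ((Fin.snoc e b : Fin (m+1) → ι) i) := by
  induction m with
  | zero =>
    intro M a b
    simp [List.ofFn_succ, Fin.snoc]
  | succ m ih =>
    intro M a b
    rw [List.ofFn_succ, List.prod_cons, Matrix.mul_apply]
    rw [← (Fin.consEquiv (fun _ : Fin (m+1) => ι)).sum_comp, Fintype.sum_prod_type]
    refine Finset.sum_congr rfl fun c _ => ?_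
    rw [ih, Finset.mul_sum]
    refine Finset.sum_congr rfl fun e _ => ?_
    rw [Fin.prod_univ_succ (n := m+1)]
    have h0 : Fin.consEquiv (fun _ : Fin (m+1) => ι) (c, e) = (Fin.cons c e : Fin (m+1) → ι) := rfl
    rw [h0]
    have h : (Fin.snoc (Fin.cons c e : Fin (m+1) → ι) b : Fin (m+2) → ι)
        = Fin.cons c (Fin.snoc e b : Fin (m+1) → ι) :=
      (Fin.cons_snoc_eq_snoc_cons c e b).symm
    rw [h]
    simp only [Fin.cons_zero, Fin.cons_succ]

theorem trace_prod {ι : Type*} [Fintype ι] [DecidableEq ι] (m : ℕ)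
    (M : Fin (m+1) → Matrix ι ι ℝ) :
    ((List.ofFn M).prod).trace = ∑ e : Fin (m+1) → ι, ∏ i, M i (e i) (e (i+1)) := by
  rw [← (Fin.consEquiv (fun _ : Fin (m+1) => ι)).sum_comp, Fintype.sum_prod_type]
  refine Finset.sum_congr rfl fun a _ => ?_
  rw [Matrix.diag_apply, path_prod]
  refine Finset.sum_congr rfl fun e _ => Finset.prod_congr rfl fun i _ => ?_
  simp only [Fin.consEquiv_apply]
  congr 1
  refine Fin.lastCases ?_ (fun i => ?_) i
  · simp
  · simp [Fin.coeSucc_eq_succ]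

theorem list_intertwine {ι κ : Type*} [Fintype ι] [DecidableEq ι] [Fintype κ] [DecidableEq κ]
    (S : Matrix ι κ ℝ) (m : ℕ) : ∀ (M : Fin m → Matrix ι ι ℝ) (M' : Fin m → Matrix κ κ ℝ),
    (∀ i, M i * S = S * M' i) → (List.ofFn M).prod * S = S * (List.ofFn M').prod := by
  induction m with
  | zero => intro M M' h; simp
  | succ m ih =>
    intro M M' h
    rw [List.ofFn_succ, List.ofFn_succ, List.prod_cons, List.prod_cons, Matrix.mul_assoc,
      ih _ _ (fun i => h i.succ), ← Matrix.mul_assoc, h, Matrix.mul_assoc]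

theorem trace_split {ι κ μ : Type*} [Fintype ι] [DecidableEq ι] [Fintype κ] [DecidableEq κ]
    [Fintype μ] [DecidableEq μ] (hc : Fintype.card ι = Fintype.card κ + Fintype.card μ)
    (I : Matrix ι κ ℝ) (r : Matrix κ ι ℝ) (p : Matrix μ ι ℝ) (σ : Matrix ι μ ℝ)
    (h1 : r * I = 1) (h2 : r * σ = 0) (h3 : p * I = 0) (h4 : p * σ = 1)
    (M : Matrix ι ι ℝ) (M' : Matrix κ κ ℝ) (M'' : Matrix μ μ ℝ)
    (hI : M * I = I * M') (hp : M'' * p = p * M) : M.trace = M'.trace + M''.trace := by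
  have e : κ ⊕ μ ≃ ι := Fintype.equivOfCardEq (by simp [hc])
  have hh : Matrix.fromRows r p * Matrix.fromCols I σ = 1 := by
    rw [Matrix.fromRows_mul_fromCols, h1, h2, h3, h4, Matrix.fromBlocks_one]
  have hk : Matrix.fromCols I σ * Matrix.fromRows r p = 1 :=
    (Matrix.mul_eq_one_comm_of_equiv e).1 hh
  rw [Matrix.fromCols_mul_fromRows] at hk
  calc M.trace = (M * (I * r + σ * p)).trace := by rw [hk, Matrix.mul_one]
    _ = (r * (M * I)).trace + (p * M * σ).trace := by
      rw [Matrix.mul_add, Matrix.trace_add, ← Matrix.mul_assoc, ← Matrix.mul_assoc,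
        Matrix.trace_mul_comm _ r, Matrix.trace_mul_comm _ p, Matrix.mul_assoc p]
    _ = _ := by
      rw [hI, ← hp, ← Matrix.mul_assoc, h1, Matrix.one_mul, Matrix.mul_assoc, h4, Matrix.mul_one]

open Polynomial in
/-- columns of the symmetric power of a rotation -/
noncomputable def symP (θ : ℝ) (L a : ℕ) : Polynomial ℝ :=
  (C (Real.cos (θ/2)) * X + C (Real.sin (θ/2)))^a * (C (-Real.sin (θ/2)) * X + C (Real.cos (θ/2)))^(L-a)

noncomputable def symT (θ : ℝ) (L j a : ℕ) : ℝ := (symP θ L a).coeff j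

open Polynomial in
theorem coeff_lin_pow (u v : ℝ) (a p : ℕ) :
    ((C u * X + C v)^a).coeff p = u^p * v^(a-p) * (a.choose p) := by
  rw [add_pow, finsetSum_coeff]
  have : ∀ k ∈ range (a+1), ((C u * X)^k * C v^(a-k) * ((a.choose k : ℕ) : ℝ[X])).coeff p
      = if p = k then u^p * v^(a-p) * (a.choose p) else 0 := by
    intro k _
    rw [mul_pow, ← C_pow, ← C_pow, ← C_eq_natCast, coeff_mul_C, coeff_mul_C, coeff_C_mul, coeff_X_pow]
    split_ifs with h <;> simp [h]
  rw [Finset.sum_congr rfl this, Finset.sum_ite_eq]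
  split_ifs with h
  · rfl
  · rw [Nat.choose_eq_zero_of_lt (by simpa using h)]; simp

theorem wigner_eq (θ : ℝ) (L j a : ℕ) (hj : j ≤ L) (ha : a ≤ L) :
    wignerd L (2 * j - L) (2 * a - L) θ =
      √((j.factorial * (L-j).factorial : ℕ)) / √((a.factorial * (L-a).factorial : ℕ)) * symT θ L j a := by
  unfold wignerd
  rw [if_pos ⟨by rw [abs_le]; omega, by rw [abs_le]; omega⟩]
  have e1 : ((L:ℤ) + (2*j - L))/2 = j := by omega
  have e2 : ((L:ℤ) - (2*j - L))/2 = (L - j : ℕ) := by omega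
  have e3 : ((L:ℤ) + (2*a - L))/2 = a := by omega
  have e4 : ((L:ℤ) - (2*a - L))/2 = (L - a : ℕ) := by omega
  have e5 : ((2*a - L : ℤ) - (2*j - L))/2 = a - j := by omega
  have e6 : ((2*j - L : ℤ) - (2*a - L))/2 = j - a := by omega
  rw [e1, e2, e3, e4, e5, e6]
  simp only [Int.toNat_natCast]
  have hs : √((j.factorial * (L-j).factorial * a.factorial * (L-a).factorial : ℕ)) =
     √((j.factorial * (L-j).factorial : ℕ)) / √((a.factorial * (L-a).factorial : ℕ)) * (a.factorial * (L-a).factorial : ℕ) := by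
    have h0 : (0:ℝ) < (a.factorial * (L-a).factorial : ℕ) := by positivity
    have h1 : (0:ℝ) < √((a.factorial * (L-a).factorial : ℕ)) := Real.sqrt_pos.2 h0
    have : ((j.factorial * (L-j).factorial * a.factorial * (L-a).factorial : ℕ) : ℝ) =
      (j.factorial * (L-j).factorial : ℕ) * (a.factorial * (L-a).factorial : ℕ) := by push_cast; ring
    rw [this, Real.sqrt_mul (by positivity)]
    field_simp
    rw [Real.sq_sqrt h0.le]
  rw [hs, mul_assoc]
  congr 1
  unfold symT symP
  rw [Polynomial.coeff_mul, Finset.mul_sum]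
  refine Finset.sum_of_injOn (fun s : ℤ => ((a - s).toNat, (j - a + s).toNat)) ?_ ?_ ?_ ?_
  · intro s hs t ht h
    simp only [coe_Icc, Set.mem_Icc, Prod.mk.injEq] at hs ht h
    omega
  · intro s hs
    simp only [coe_Icc, Set.mem_Icc] at hs
    refine Finset.mem_coe.2 (Finset.HasAntidiagonal.mem_antidiagonal.2 ?_)
    change (a - s).toNat + (j - a + s).toNat = j
    omega
  · rintro ⟨p, q⟩ hpq hn
    replace hpq : p + q = j := Finset.HasAntidiagonal.mem_antidiagonal.1 hpq
    rw [coeff_lin_pow, coeff_lin_pow]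
    by_cases hp : p ≤ a
    · by_cases hq : q ≤ L - a
      · exfalso; apply hn
        refine ⟨a - p, ?_, ?_⟩
        · simp only [coe_Icc, Set.mem_Icc]; omega
        · ext <;> simp <;> omega
      · rw [Nat.choose_eq_zero_of_lt (n := L - a) (by omega)]; simp
    · rw [Nat.choose_eq_zero_of_lt (n := a) (by omega)]; simp
  · intro s hs
    simp only [Finset.mem_Icc] at hs
    obtain ⟨t, rfl⟩ : ∃ t : ℕ, s = t := ⟨s.toNat, by omega⟩
    obtain ⟨p, hp⟩ : ∃ p : ℕ, a = t + p := ⟨a - t, by omega⟩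
    obtain ⟨q, hq⟩ : ∃ q : ℕ, (j : ℤ) - a + t = q := ⟨(j - a + t : ℤ).toNat, by omega⟩
    obtain ⟨w, hw⟩ : ∃ w : ℕ, L - j = t + w := ⟨L - j - t, by omega⟩
    have f1 : (a : ℤ) - t = p := by omega
    have f2 : ((L - j : ℕ) : ℤ) - t = w := by omega
    have f3 : (L : ℤ) + (a - j) - 2 * t = (p + w : ℕ) := by omega
    have f4 : (j : ℤ) - a + 2 * t = (q + t : ℕ) := by omega
    have f5 : L - a = q + w := by omega
    simp only [coeff_lin_pow]
    rw [f1, f2, f3, f4, hq, f5]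
    simp only [Int.toNat_natCast, zpow_natCast]
    have g1 : a - p = t := by omega
    rw [g1, Nat.add_sub_cancel_left]
    have c1 : ((a.choose p : ℕ) : ℝ) = a.factorial / (p.factorial * t.factorial) := by
      rw [hp, add_comm t p, Nat.choose_symm_add, Nat.add_choose, Nat.cast_div (Nat.factorial_mul_factorial_dvd_factorial_add _ _) (by positivity)]
      push_cast; rfl
    have c2 : (((q+w).choose q : ℕ) : ℝ) = (q+w).factorial / (q.factorial * w.factorial) := by
      rw [Nat.choose_symm_add, Nat.add_choose, Nat.cast_div (Nat.factorial_mul_factorial_dvd_factorial_add _ _) (by positivity)]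
      push_cast; rfl
    rw [c1, c2, neg_pow]
    push_cast
    field_simp
    ring

theorem wigner_neg (θ : ℝ) (L j a : ℕ) (hj : j ≤ L) (ha : a ≤ L) :
    wignerd L (L - 2 * j) (L - 2 * a) θ =
      (-1)^j / (-1)^a * wignerd L (2 * j - L) (2 * a - L) θ := by
  unfold wignerd
  rw [if_pos ⟨by rw [abs_le]; omega, by rw [abs_le]; omega⟩,
    if_pos ⟨by rw [abs_le]; omega, by rw [abs_le]; omega⟩]
  have e1 : ((L:ℤ) + (2*j - L))/2 = j := by omega
  have e2 : ((L:ℤ) - (2*j - L))/2 = (L - j) := by omega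
  have e3 : ((L:ℤ) + (2*a - L))/2 = a := by omega
  have e4 : ((L:ℤ) - (2*a - L))/2 = (L - a) := by omega
  have e5 : ((2*a - L : ℤ) - (2*j - L))/2 = a - j := by omega
  have e6 : ((2*j - L : ℤ) - (2*a - L))/2 = j - a := by omega
  have e1' : ((L:ℤ) + (L - 2*j))/2 = L - j := by omega
  have e2' : ((L:ℤ) - (L - 2*j))/2 = j := by omega
  have e3' : ((L:ℤ) + (L-2*a))/2 = L-a := by omega
  have e4' : ((L:ℤ) - (L-2*a))/2 = a := by omega
  have e5' : ((L-2*a : ℤ) - (L-2*j))/2 = j - a := by omega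
  have e6' : ((L-2*j : ℤ) - (L-2*a))/2 = a - j := by omega
  rw [e1, e2, e3, e4, e5, e6, e1', e2', e3', e4', e5', e6']
  clear e1 e2 e3 e4 e5 e6 e1' e2' e3' e4' e5' e6'
  rw [mul_left_comm]
  congr 1
  · congr 2; ring
  rw [Finset.mul_sum]
  refine Finset.sum_bij' (fun s _ => s + a - j) (fun s _ => s + j - a) ?_ ?_ ?_ ?_ ?_
  · intro s hs; simp only [Finset.mem_Icc, max_le_iff, le_min_iff] at *; omega
  · intro s hs; simp only [Finset.mem_Icc, max_le_iff, le_min_iff] at *; omega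
  · intro s hs; ring
  · intro s hs; ring
  · intro s hs
    rw [show (L:ℤ) + (a - j) - 2 * (s + a - j) = L + (j - a) - 2 * s by ring,
      show (j:ℤ) - a + 2 * (s + a - j) = a - j + 2 * s by ring,
      show (j:ℤ) - a + (s + a - j) = s by ring,
      show (a:ℤ) - (s + a - j) = j - s by ring,
      show (s:ℤ) + a - j = a - j + s by ring,
      show (L:ℤ) - j - (a - j + s) = L - a - s by ring]
    have hsg : (-1:ℝ)^((a:ℤ) - j + s) = (-1)^j / (-1)^a * (-1)^s := by
      rw [zpow_add₀ (by norm_num), zpow_sub₀ (by norm_num), zpow_natCast, zpow_natCast]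
      rcases neg_one_pow_eq_or ℝ j with h | h <;> rcases neg_one_pow_eq_or ℝ a with h' | h' <;>
        simp [h, h']
    rw [hsg]
    rw [Nat.mul_assoc, Nat.mul_comm]
    push_cast; ring

theorem symT_zero (θ : ℝ) (L j a : ℕ) (ha : a ≤ L) (hj : L < j) : symT θ L j a = 0 := by
  unfold symT symP
  rw [Polynomial.coeff_mul]
  refine Finset.sum_eq_zero ?_
  rintro ⟨p, q⟩ hpq
  replace hpq : p + q = j := Finset.HasAntidiagonal.mem_antidiagonal.1 hpq
  rw [coeff_lin_pow, coeff_lin_pow]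
  by_cases hp : p ≤ a
  · rw [Nat.choose_eq_zero_of_lt (n := L - a) (by omega)]; simp
  · rw [Nat.choose_eq_zero_of_lt (n := a) (by omega)]; simp

/-- coefficient shift -/
noncomputable def shT (θ : ℝ) (L j a : ℕ) : ℝ := if j = 0 then 0 else symT θ L (j-1) a

open Polynomial in
theorem coeff_lin_mul (u v : ℝ) (P : Polynomial ℝ) (j : ℕ) :
    ((C u * X + C v) * P).coeff j = u * (if j = 0 then 0 else P.coeff (j-1)) + v * P.coeff j := by
  rw [add_mul, coeff_add, mul_assoc, coeff_C_mul, coeff_C_mul]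
  cases j <;> simp [coeff_X_mul]

theorem symT_succ (θ : ℝ) (L j a : ℕ) :
    symT θ (L+1) j (a+1) = Real.cos (θ/2) * shT θ L j a + Real.sin (θ/2) * symT θ L j a := by
  unfold symT shT symT
  rw [← coeff_lin_mul]
  congr 1
  unfold symP
  rw [Nat.add_sub_add_right, pow_succ]
  ring

theorem symT_castSucc (θ : ℝ) (L j a : ℕ) (ha : a ≤ L) :
    symT θ (L+1) j a = -Real.sin (θ/2) * shT θ L j a + Real.cos (θ/2) * symT θ L j a := by
  unfold symT shT symT
  rw [← coeff_lin_mul]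
  congr 1
  unfold symP
  rw [Nat.succ_sub ha, pow_succ]
  ring

theorem symP_mul (θ : ℝ) (L K a b : ℕ) (ha : a ≤ L) (hb : b ≤ K) :
    symP θ L a * symP θ K b = symP θ (L+K) (a+b) := by
  unfold symP
  rw [show L + K - (a + b) = (L - a) + (K - b) by omega, pow_add, pow_add]
  ring

noncomputable def tenM (A B : ℕ) (θ : ℝ) (D : ℤ) : Matrix (Fin A × Fin B) (Fin A × Fin B) ℝ :=
  fun x y => if 2 * ((x.1 : ℤ) + x.2) - A - B + 2 = D then
    symT θ (A-1) x.1 y.1 * symT θ (B-1) x.2 y.2 else 0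

noncomputable def sM (S : ℕ) (θ : ℝ) (D : ℤ) : Matrix (Fin S) (Fin S) ℝ :=
  fun x y => if 2 * (x : ℤ) - S + 1 = D then symT θ (S-1) x y else 0

noncomputable def mI (A B : ℕ) : Matrix (Fin (A+1) × Fin (B+1)) (Fin A × Fin B) ℝ :=
  fun x y => (if x = (y.1.succ, y.2.castSucc) then 1 else 0)
    - (if x = (y.1.castSucc, y.2.succ) then 1 else 0)

noncomputable def mR (A B : ℕ) : Matrix (Fin A × Fin B) (Fin (A+1) × Fin (B+1)) ℝ :=
  fun y x => if (y.1 : ℕ) + y.2 + 1 = x.1 + x.2 ∧ (x.1 : ℕ) ≤ y.1 then -1 else 0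

noncomputable def mP (A B : ℕ) : Matrix (Fin (A+B+1)) (Fin (A+1) × Fin (B+1)) ℝ :=
  fun k x => if (k : ℕ) = x.1 + x.2 then 1 else 0

noncomputable def mS (A B : ℕ) : Matrix (Fin (A+1) × Fin (B+1)) (Fin (A+B+1)) ℝ :=
  fun x k => if x = (⟨min k A, by omega⟩, ⟨k - min (k:ℕ) A, by omega⟩) then 1 else 0

theorem mul_mI {A B : ℕ} {ι : Type*} (M : Matrix ι (Fin (A+1) × Fin (B+1)) ℝ) (x : ι)
    (y : Fin A × Fin B) : (M * mI A B) x y =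
      M x (y.1.succ, y.2.castSucc) - M x (y.1.castSucc, y.2.succ) := by
  rw [Matrix.mul_apply]
  simp only [mI, mul_sub, Finset.sum_sub_distrib, mul_ite, mul_one, mul_zero, Finset.sum_ite_eq',
    Finset.mem_univ, if_true]

theorem mul_mS {A B : ℕ} {ι : Type*} (M : Matrix ι (Fin (A+1) × Fin (B+1)) ℝ) (x : ι)
    (k : Fin (A+B+1)) : (M * mS A B) x k =
      M x (⟨min k A, by omega⟩, ⟨k - min (k:ℕ) A, by omega⟩) := by
  rw [Matrix.mul_apply]
  simp only [mS, mul_ite, mul_one, mul_zero, Finset.sum_ite_eq',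
    Finset.mem_univ, if_true]

theorem mRI (A B : ℕ) : mR A B * mI A B = 1 := by
  ext ⟨a, b⟩ ⟨c, d⟩
  rw [mul_mI, Matrix.one_apply]
  simp only [mR, Fin.val_succ, Fin.val_castSucc, Prod.mk.injEq, Fin.ext_iff]
  split_ifs <;> first | (exfalso; omega) | norm_num

theorem mRS (A B : ℕ) : mR A B * mS A B = 0 := by
  ext ⟨a, b⟩ k
  rw [mul_mS]
  simp only [mR, Matrix.zero_apply]
  rw [if_neg]
  omega

theorem mPI (A B : ℕ) : mP A B * mI A B = 0 := by
  ext k ⟨c, d⟩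
  rw [mul_mI]
  simp only [mP, Fin.val_succ, Fin.val_castSucc, Matrix.zero_apply]
  split_ifs <;> first | (exfalso; omega) | norm_num

theorem mPS (A B : ℕ) : mP A B * mS A B = 1 := by
  ext k l
  rw [mul_mS, Matrix.one_apply]
  simp only [mP, Fin.ext_iff]
  split_ifs <;> first | (exfalso; omega) | norm_num

theorem sum_succ_pick {A : ℕ} (x : Fin (A+1)) (f : ℕ → ℝ) :
    ∑ z : Fin A, (if x = z.succ then f z else 0) = if (x : ℕ) = 0 then 0 else f (x - 1) := by
  refine Fin.cases ?_ (fun i => ?_) x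
  · simp [(Fin.succ_ne_zero _).symm]
  · simp [Fin.succ_inj]

theorem sum_castSucc_pick {A : ℕ} (x : Fin (A+1)) (f : ℕ → ℝ) (hf : f A = 0) :
    ∑ z : Fin A, (if x = z.castSucc then f z else 0) = f x := by
  refine Fin.lastCases ?_ (fun i => ?_) x
  · simp only [Fin.val_last, hf]
    refine Finset.sum_eq_zero fun z _ => if_neg (Fin.castSucc_lt_last z).ne'
  · simp [Fin.castSucc_inj]

theorem ten_mI (A B : ℕ) (θ : ℝ) (D : ℤ) :
    tenM (A+1) (B+1) θ D * mI A B = mI A B * tenM A B θ D := by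
  ext ⟨x1, x2⟩ ⟨y1, y2⟩
  rw [mul_mI, Matrix.mul_apply]
  obtain ⟨A, rfl⟩ : ∃ A', A = A' + 1 := ⟨A - 1, by have := y1.2; omega⟩
  obtain ⟨B, rfl⟩ : ∃ B', B = B' + 1 := ⟨B - 1, by have := y2.2; omega⟩
  have key : ∀ z : Fin (A+1) × Fin (B+1), mI (A+1) (B+1) (x1, x2) z * tenM (A+1) (B+1) θ D z (y1, y2) =
      (if 2 * ((x1 : ℤ) + x2) - (A+1+1 : ℕ) - (B+1+1 : ℕ) + 2 = D then (1:ℝ) else 0) *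
      ((if x1 = z.1.succ then symT θ A z.1 y1 else 0) * (if x2 = z.2.castSucc then symT θ B z.2 y2 else 0)
      - (if x1 = z.1.castSucc then symT θ A z.1 y1 else 0) * (if x2 = z.2.succ then symT θ B z.2 y2 else 0)) := by
    rintro ⟨z1, z2⟩
    have w : (x1 = z1.succ ∧ x2 = z2.castSucc ∨ x1 = z1.castSucc ∧ x2 = z2.succ) →
      ((2 * ((x1 : ℤ) + x2) - (A+1+1 : ℕ) - (B+1+1 : ℕ) + 2 = D) ↔
       (2 * ((z1 : ℤ) + z2) - (A+1 : ℕ) - (B+1 : ℕ) + 2 = D)) := by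
      rintro (⟨rfl, rfl⟩ | ⟨rfl, rfl⟩) <;> simp only [Fin.val_succ, Fin.val_castSucc] <;>
        push_cast <;> constructor <;> intro h <;> linarith
    simp only [mI, tenM, Prod.mk.injEq, Nat.add_sub_cancel]
    by_cases h1 : x1 = z1.succ ∧ x2 = z2.castSucc <;> by_cases h2 : x1 = z1.castSucc ∧ x2 = z2.succ
    · exfalso
      have := h1.1.symm.trans h2.1
      simp [Fin.ext_iff] at this
    · have h3 : ¬ (x1 = z1.castSucc) := by
        intro h; have := h1.1.symm.trans h; simp [Fin.ext_iff] at this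
      rw [if_pos h1, if_neg h2, if_pos h1.1, if_pos h1.2, if_neg h3]
      simp only [w (Or.inl h1)]
      split_ifs <;> ring
    · have h3 : ¬ (x1 = z1.succ) := by
        intro h; have := h.symm.trans h2.1; simp [Fin.ext_iff] at this
      rw [if_neg h1, if_pos h2, if_pos h2.1, if_pos h2.2, if_neg h3]
      simp only [w (Or.inr h2)]
      split_ifs <;> ring
    · rw [if_neg h1, if_neg h2, ite_zero_mul_ite_zero, ite_zero_mul_ite_zero, if_neg h1, if_neg h2]
      ring
  rw [Finset.sum_congr rfl (fun z _ => key z), ← Finset.mul_sum, Finset.sum_sub_distrib,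
    Fintype.sum_prod_type, Fintype.sum_prod_type]
  simp only [← Finset.mul_sum, ← Finset.sum_mul]
  rw [sum_succ_pick x1 (fun j => symT θ A j y1), sum_succ_pick x2 (fun j => symT θ B j y2),
    sum_castSucc_pick x1 (fun j => symT θ A j y1) (symT_zero _ _ _ _ (by omega) (by omega)),
    sum_castSucc_pick x2 (fun j => symT θ B j y2) (symT_zero _ _ _ _ (by omega) (by omega))]
  simp only [tenM, Nat.add_sub_cancel, Fin.val_succ, Fin.val_castSucc]
  rw [symT_succ, symT_succ, symT_castSucc _ _ _ _ (by omega), symT_castSucc _ _ _ _ (by omega)]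
  change _ = _ * (shT θ A x1 y1 * _ - _ * shT θ B x2 y2)
  have hcs := Real.sin_sq_add_cos_sq (θ/2)
  split_ifs
  · rw [one_mul]
    linear_combination (shT θ A x1 y1 * symT θ B x2 y2 - symT θ A x1 y1 * shT θ B x2 y2) * hcs
  · ring

theorem mP_ten (A B : ℕ) (θ : ℝ) (D : ℤ) :
    sM (A+B+1) θ D * mP A B = mP A B * tenM (A+1) (B+1) θ D := by
  ext k ⟨x1, x2⟩
  rw [Matrix.mul_apply, Matrix.mul_apply]
  have h1 : ∑ l, sM (A+B+1) θ D k l * mP A B l (x1, x2) =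
      sM (A+B+1) θ D k ⟨x1 + x2, by omega⟩ := by
    rw [Finset.sum_eq_single ⟨x1 + x2, by omega⟩]
    · simp [mP]
    · intro l _ hl
      rw [mP, if_neg, mul_zero]
      intro h; apply hl; ext; exact h
    · simp
  rw [h1]
  have h2 : ∀ z : Fin (A+1) × Fin (B+1), mP A B k z * tenM (A+1) (B+1) θ D z (x1, x2) =
      (if 2 * (k : ℤ) - (A+B+1 : ℕ) + 1 = D then (1:ℝ) else 0) *
        (if (k : ℕ) = z.1 + z.2 then symT θ A z.1 x1 * symT θ B z.2 x2 else 0) := by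
    rintro ⟨z1, z2⟩
    simp only [mP, tenM, Nat.add_sub_cancel]
    by_cases h : (k : ℕ) = z1 + z2
    · rw [if_pos h, if_pos h]
      have : (2 * ((z1 : ℤ) + z2) - (A+1 : ℕ) - (B+1 : ℕ) + 2 = D) ↔ 2 * (k : ℤ) - (A+B+1 : ℕ) + 1 = D := by
        rw [h]; push_cast; constructor <;> intro h <;> linarith
      simp only [this]
      split_ifs <;> ring
    · rw [if_neg h, if_neg h]; ring
  rw [Finset.sum_congr rfl (fun z _ => h2 z), ← Finset.mul_sum, ← Finset.sum_filter]
  have h3 : symT θ (A+B) k (x1 + x2) =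
      ∑ z ∈ (Finset.univ : Finset (Fin (A+1) × Fin (B+1))).filter (fun z => (k : ℕ) = z.1 + z.2),
        symT θ A z.1 x1 * symT θ B z.2 x2 := by
    rw [symT, ← symP_mul _ _ _ _ _ (by omega) (by omega), Polynomial.coeff_mul]
    symm
    refine Finset.sum_of_injOn (fun z => ((z.1 : ℕ), (z.2 : ℕ))) ?_ ?_ ?_ ?_
    · rintro ⟨a, b⟩ _ ⟨c, d⟩ _ h
      simpa [Fin.ext_iff] using h
    · rintro ⟨a, b⟩ h
      simp only [Finset.coe_filter, Finset.mem_univ, true_and, Set.mem_ofPred_eq] at h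
      exact Finset.mem_coe.2 (Finset.HasAntidiagonal.mem_antidiagonal.2 h.symm)
    · rintro ⟨p, q⟩ hpq hn
      replace hpq : p + q = k := Finset.HasAntidiagonal.mem_antidiagonal.1 hpq
      by_cases hp : p ≤ A
      · by_cases hq : q ≤ B
        · exfalso; apply hn
          refine ⟨(⟨p, by omega⟩, ⟨q, by omega⟩), ?_, rfl⟩
          simp [hpq]
        · have := symT_zero θ B q x2 (by omega) (by omega)
          simp only [symT] at this
          simp [this]
      · have := symT_zero θ A p x1 (by omega) (by omega)
        simp only [symT] at this
        simp [this]
    · intro z _; rfl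
  rw [← h3]
  simp only [sM, Nat.add_sub_cancel]
  split_ifs <;> ring

noncomputable def trT (m : ℕ) (θ : Fin (m+1) → ℝ) (D : Fin (m+1) → ℤ) (A B : ℕ) : ℝ :=
  ∑ e : Fin (m+1) → Fin A × Fin B, ∏ i, tenM A B (θ i) (D i) (e i) (e (i+1))

noncomputable def trS (m : ℕ) (θ : Fin (m+1) → ℝ) (D : Fin (m+1) → ℤ) (S : ℕ) : ℝ :=
  ∑ e : Fin (m+1) → Fin S, ∏ i, sM S (θ i) (D i) (e i) (e (i+1))

theorem trT_succ (m : ℕ) (θ : Fin (m+1) → ℝ) (D : Fin (m+1) → ℤ) (A B : ℕ) :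
    trT m θ D (A+1) (B+1) = trT m θ D A B + trS m θ D (A+B+1) := by
  unfold trT trS
  rw [← trace_prod m (fun i => tenM (A+1) (B+1) (θ i) (D i)),
    ← trace_prod m (fun i => tenM A B (θ i) (D i)), ← trace_prod m (fun i => sM (A+B+1) (θ i) (D i))]
  refine trace_split ?_ (mI A B) (mR A B) (mP A B) (mS A B) (mRI A B) (mRS A B) (mPI A B) (mPS A B)
    _ _ _ ?_ ?_
  · simp; ring
  · exact list_intertwine _ _ _ _ (fun i => ten_mI _ _ _ _)
  · exact list_intertwine _ _ _ _ (fun i => mP_ten _ _ _ _)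

theorem trT_eq (m : ℕ) (θ : Fin (m+1) → ℝ) (D : Fin (m+1) → ℤ) (A : ℕ) : ∀ B,
    trT m θ D A B = ∑ k ∈ Finset.range (min A B), trS m θ D (max A B - min A B + 2 * k + 1) := by
  induction A with
  | zero => intro B; simp [trT]
  | succ A ih =>
    intro B
    cases B with
    | zero => simp [trT]
    | succ B =>
      rw [trT_succ, ih, Nat.add_min_add_right, Nat.add_max_add_right, Finset.sum_range_succ,
        Nat.add_sub_add_right]
      congr 2
      omega

theorem pick_sum (m L : ℕ) (θ : Fin (m+1) → ℝ) (N : Fin (m+1) → ℤ)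
    (hN : ∀ i, (N i - L) % 2 = 0) :
    ∑ b : Fin (m+1) → Fin (L+1), ∏ i, (if 2 * (b i : ℤ) - L = N i then
      wignerd L (2 * (b i : ℤ) - L) (2 * (b (i+1) : ℤ) - L) (θ i) else 0) =
    ∏ i, wignerd L (N i) (N (i+1)) (θ i) := by
  by_cases h : ∀ i, |N i| ≤ L
  · have hb : ∀ i, ∃ b : Fin (L+1), 2 * (b : ℤ) - L = N i := by
      intro i
      have h1 := abs_le.1 (h i)
      have h2 := hN i
      refine ⟨⟨((N i + L)/2).toNat, by omega⟩, ?_⟩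
      simp only
      omega
    choose b hb using hb
    rw [Finset.sum_eq_single b]
    · refine Finset.prod_congr rfl fun i _ => ?_
      rw [if_pos (hb i), hb, hb]
    · intro c _ hc
      obtain ⟨i, hi⟩ := Function.ne_iff.1 hc
      refine Finset.prod_eq_zero (Finset.mem_univ i) (if_neg ?_)
      intro h'
      apply hi
      have := hb i
      ext
      omega
    · simp
  · push Not at h
    obtain ⟨i, hi⟩ := h
    rw [Finset.prod_eq_zero (Finset.mem_univ i)]
    · refine Finset.sum_eq_zero fun c _ => ?_
      refine Finset.prod_eq_zero (Finset.mem_univ i) (if_neg ?_)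
      intro h'
      have := (c i).2
      rw [← h', lt_abs] at hi
      omega
    · rw [wignerd, if_neg]
      intro h'
      exact absurd h'.1 (not_le.2 hi)

theorem cyc_prod (m : ℕ) (u : Fin (m+1) → ℝ) (hu : ∀ i, u i ≠ 0) :
    ∏ i, u i / u (i+1) = 1 := by
  have h : ∏ i, u (i+1) = ∏ i, u i := Equiv.prod_comp (Equiv.addRight (1 : Fin (m+1))) u
  rw [Finset.prod_div_distrib, h, div_self]
  exact Finset.prod_ne_zero_iff.2 fun i _ => hu i

/-- normalisation weight -/
noncomputable def wt (L j : ℕ) : ℝ := √((j.factorial * (L-j).factorial : ℕ))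

theorem wt_ne (L j : ℕ) : wt L j ≠ 0 := (Real.sqrt_pos.2 (by positivity)).ne'

theorem trS_eq (m : ℕ) (θ : Fin (m+1) → ℝ) (D : Fin (m+1) → ℤ) (S : ℕ)
    (hD : ∀ i, (D i - S) % 2 = 0) :
    trS m θ D (S+1) = ∏ i, wignerd S (D i) (D (i+1)) (θ i) := by
  rw [← pick_sum m S θ D hD, trS]
  refine Finset.sum_congr rfl fun e _ => ?_
  rw [← one_mul (∏ i, sM _ _ _ _ _), ← cyc_prod m (fun i => wt S (e i)) (fun i => wt_ne _ _),
    ← Finset.prod_mul_distrib]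
  refine Finset.prod_congr rfl fun i _ => ?_
  have : (2 * (e i : ℤ) - (S+1 : ℕ) + 1 = D i) ↔ 2 * (e i : ℤ) - S = D i := by
    push_cast; constructor <;> intro h <;> linarith
  rw [wigner_eq _ _ _ _ (by omega) (by omega)]
  simp only [sM, Nat.add_sub_cancel, this, wt]
  split_ifs
  · rfl
  · ring

theorem lhs_eq (m : ℕ) (θ : Fin (m+1) → ℝ) (D : Fin (m+1) → ℤ) (L K : ℕ)
    (hD : ∀ i, (D i - (L + K)) % 2 = 0) :
    ∑ e : Fin (m+1) → Fin (L + 1), ∏ i : Fin (m+1),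
      (wignerd L (-L + 2 * (e i : ℤ)) (-L + 2 * (e (i + 1) : ℤ)) (θ i) *
        wignerd K (-L + 2 * (e i : ℤ) + D i) (-L + 2 * (e (i + 1) : ℤ) + D (i + 1)) (θ i))
    = trT m θ D (L+1) (K+1) := by
  rw [← (Equiv.arrowCongr (Equiv.refl (Fin (m+1))) (Fin.revPerm (n := L+1))).sum_comp, trT,
    ← (Equiv.arrowProdEquivProdArrow (Fin (m+1)) (fun _ => Fin (L+1)) (fun _ => Fin (K+1))).symm.sum_comp,
    Fintype.sum_prod_type]
  refine Finset.sum_congr rfl fun a _ => ?_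
  have hr : ∀ i, -(L:ℤ) + 2 * ((Equiv.arrowCongr (Equiv.refl (Fin (m+1))) (Fin.revPerm (n := L+1)) a i : Fin (L+1)) : ℤ)
      = L - 2 * (a i : ℤ) := by
    intro i
    have : ((Equiv.arrowCongr (Equiv.refl (Fin (m+1))) (Fin.revPerm (n := L+1)) a i : Fin (L+1)) : ℕ) = L - a i := by
      simp [Fin.val_rev]
    rw [this]
    omega
  simp only [hr]
  rw [Finset.prod_mul_distrib, ← pick_sum m K θ (fun i => L - 2 * (a i : ℤ) + D i)
    (fun i => by have := hD i; omega), Finset.mul_sum]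
  refine Finset.sum_congr rfl fun b _ => ?_
  rw [← one_mul (∏ i, tenM _ _ _ _ _ _),
    ← cyc_prod m (fun i => (-1)^(a i : ℕ) * wt L (a i) * wt K (b i))
      (fun i => mul_ne_zero (mul_ne_zero (pow_ne_zero _ (by norm_num)) (wt_ne _ _)) (wt_ne _ _)),
    ← Finset.prod_mul_distrib, ← Finset.prod_mul_distrib]
  refine Finset.prod_congr rfl fun i _ => ?_
  rw [wigner_neg _ _ _ _ (by omega) (by omega), wigner_eq _ _ _ _ (by omega) (by omega),
    wigner_eq _ _ _ _ (by omega) (by omega)]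
  have : (2 * ((a i : ℤ) + b i) - (L+1 : ℕ) - (K+1 : ℕ) + 2 = D i) ↔
      2 * (b i : ℤ) - K = L - 2 * (a i : ℤ) + D i := by
    push_cast; constructor <;> intro h <;> linarith
  change _ = _ * (if (2 * ((a i : ℤ) + b i) - (L+1 : ℕ) - (K+1 : ℕ) + 2 = D i) then
    symT (θ i) L (a i) (a (i+1)) * symT (θ i) K (b i) (b (i+1)) else 0)
  simp only [this]
  change (_ / _ * (wt L (a i) / wt L (a (i+1)) * _)) * (if _ then wt K (b i) / wt K (b (i+1)) * _ else 0) = _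
  have n1 := wt_ne L (a (i+1))
  have n2 := wt_ne K (b (i+1))
  have n3 : (-1:ℝ)^(a (i+1) : ℕ) ≠ 0 := pow_ne_zero _ (by norm_num)
  split_ifs
  · field_simp
  · ring

/-- Composite rule for Wigner d-matrices, general cyclic case with `n ≥ 1` vertices
(doubled indices: `L₁ = 2ℓ₁`, `L₂ = 2ℓ₂`, `D i = 2Δᵢ`; the magnetic indices
`εᵢ ∈ {-ℓ₁, …, ℓ₁}` are encoded as `-L₁ + 2 (e i)` with `e i ∈ {0, …, L₁}`, the
recoupled spin `s ∈ {|ℓ₁-ℓ₂|, …, ℓ₁+ℓ₂}` as `|L₁-L₂| + 2k`, and `i + 1` is taken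
cyclically in `Fin n`):
`∑_{ε} ∏ᵢ d^{ℓ₁}_{εᵢ,εᵢ₊₁}(θᵢ) d^{ℓ₂}_{εᵢ+Δᵢ,εᵢ₊₁+Δᵢ₊₁}(θᵢ)
  = ∑_s ∏ᵢ d^s_{Δᵢ,Δᵢ₊₁}(θᵢ)`. -/
theorem wignerd_composite_rule_cyclic
    (n : ℕ) [NeZero n]
    (L₁ L₂ : ℤ) (hL₁ : 0 ≤ L₁) (hL₂ : 0 ≤ L₂)
    (θ : Fin n → ℝ) (D : Fin n → ℤ)
    (hD : ∀ i : Fin n, (D i - (L₁ + L₂)) % 2 = 0) :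
    ∑ e : Fin n → Fin (L₁.toNat + 1), ∏ i : Fin n,
      (wignerd L₁ (-L₁ + 2 * (e i : ℤ)) (-L₁ + 2 * (e (i + 1) : ℤ)) (θ i) *
        wignerd L₂ (-L₁ + 2 * (e i : ℤ) + D i) (-L₁ + 2 * (e (i + 1) : ℤ) + D (i + 1))
          (θ i))
      = ∑ k ∈ Finset.range ((min L₁ L₂).toNat + 1), ∏ i : Fin n,
          wignerd (|L₁ - L₂| + 2 * k) (D i) (D (i + 1)) (θ i) := by
  obtain ⟨m, rfl⟩ : ∃ m, n = m + 1 := ⟨n - 1, by have := NeZero.ne n; omega⟩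
  obtain ⟨L, rfl⟩ := Int.eq_ofNat_of_zero_le hL₁
  obtain ⟨K, rfl⟩ := Int.eq_ofNat_of_zero_le hL₂
  have h := lhs_eq m θ D L K hD
  rw [trT_eq] at h
  refine Eq.trans h ?_
  have hmin : (min (L:ℤ) K).toNat + 1 = min (L+1) (K+1) := by omega
  rw [hmin]
  refine Finset.sum_congr rfl fun k _ => ?_
  have habs : |(L:ℤ) - K| + 2 * k = ((max (L+1) (K+1) - min (L+1) (K+1) + 2 * k : ℕ) : ℤ) := by
    rcases abs_cases ((L:ℤ) - K) with ⟨h1, _⟩ | ⟨h1, _⟩ <;> omega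
  rw [habs]
  refine trS_eq m θ D _ fun i => ?_
  have := hD i
  omega
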